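/- Let l > 0, m > 0, 0 < θ < π, γ = M(l), δ = R_θ·M(m)·R_{-θ}, and let w and v be the explicit vectors w = (sin θ·(cosh m - 1)·sinh l, -sin θ·(cosh m - 1)·(cosh l + 1), sinh l·sinh m + cos θ·(cosh l + 1)·(cosh m - 1)) and v = (sinh l·sinh m + (cosh l - 1)(cosh m - 1)·cos θ, -sinh m·(cosh l - 1) - sinh l·(cosh m - 1)·cos θ, -sin θ·sinh l·(cosh m - 1)). Then v - δ·v = 2(cosh m - 1)·((cosh l - 1)·cos θ, -sinh l·cos θ, -sinh l·sin θ), and the linear span of the three vectors w, (0,0,1), and v - δ·v has dimension exactly 2. -/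

import Mathlib

/-- The Minkowski bilinear form on ℝ³. -/
noncomputable def B (x y : Fin 3 → ℝ) : ℝ := -(x 0 * y 0) + x 1 * y 1 + x 2 * y 2

/-- Hyperbolic translation of length `l` along the standard axis. -/
noncomputable def Mmat (l : ℝ) : Matrix (Fin 3) (Fin 3) ℝ :=
  !![Real.cosh l, Real.sinh l, 0; Real.sinh l, Real.cosh l, 0; 0, 0, 1]

/-- Rotation by angle `θ`. -/
noncomputable def Rmat (θ : ℝ) : Matrix (Fin 3) (Fin 3) ℝ :=
  !![1, 0, 0; 0, Real.cos θ, -Real.sin θ; 0, Real.sin θ, Real.cos θ]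

/-- Generator of the fixed line of `δγ`. -/
noncomputable def wvec (l m θ : ℝ) : Fin 3 → ℝ :=
  ![Real.sin θ * (Real.cosh m - 1) * Real.sinh l,
    -(Real.sin θ * (Real.cosh m - 1) * (Real.cosh l + 1)),
    Real.sinh l * Real.sinh m + Real.cos θ * (Real.cosh l + 1) * (Real.cosh m - 1)]

/-- Generator of the fixed line of the commutator `α = δ⁻¹γ⁻¹δγ`. -/
noncomputable def vvec (l m θ : ℝ) : Fin 3 → ℝ :=
  ![Real.sinh l * Real.sinh m + (Real.cosh l - 1) * (Real.cosh m - 1) * Real.cos θ,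
    -(Real.sinh m * (Real.cosh l - 1)) - Real.sinh l * (Real.cosh m - 1) * Real.cos θ,
    -(Real.sin θ * Real.sinh l * (Real.cosh m - 1))]

/-!
Let `o = (1, 0, 0)`. The axes of `γ` and `δ` cross at `o`, and `γ` and `δ` are products of two
half-turns about points of those axes: `γ = h_o h_p` and `δ = h_q h_o`, where `p` is the midpoint
of `o` and `γ⁻¹o`. Hence `δγ = h_q h_p`, so `p` lies on the axis of `δγ` as well as on that of `γ`;
that is, `w` and `(0, 0, 1)` are both orthogonal to `p`. So is `v - δv`, by the explicit formula
for it. The span in question is therefore contained in the plane `p^⊥`, and it is the whole plane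
because `(0, 0, 1)` is independent of `w` if `sin θ ≠ 0`, and of `v - δv` if `cos θ ≠ 0`.
-/

open Real Matrix Module Submodule

section LinearAlgebra

variable {K V ι : Type*} [Field K] [AddCommGroup V] [Module K V]

lemma finrank_span_eq_card_of_subset_ker [Fintype ι] {f : Dual K V} (hf : f ≠ 0)
    (hV : finrank K V = Fintype.card ι + 1) {b : ι → V} (hb : LinearIndependent K b)
    {s : Set V} (hbs : Set.range b ⊆ s) (hs : s ⊆ LinearMap.ker f) :
    finrank K (span K s) = Fintype.card ι := by
  have : FiniteDimensional K V := FiniteDimensional.of_finrank_eq_succ hV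
  have hker : finrank K (LinearMap.ker f) = Fintype.card ι := by
    have := Dual.finrank_ker_add_one_of_ne_zero hf
    lia
  apply le_antisymm
  · exact (finrank_mono (span_le.2 hs)).trans_eq hker
  · exact (finrank_span_eq_card hb).ge.trans (finrank_mono (span_mono hbs))

lemma linearIndependent_pair_of_dual_eq_zero {f : Dual K V} {x y : V} (hx : f x ≠ 0)
    (hy : f y = 0) (hy' : y ≠ 0) : LinearIndependent K ![x, y] := by
  refine linearIndependent_fin2.2 ⟨hy', fun a (hxy : a • y = x) ↦ hx ?_⟩
  rw [← hxy, map_smul, hy, smul_zero]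

end LinearAlgebra

section Isometries

variable (l θ a b c : ℝ)

lemma vec3_sub_Mmat_mulVec :
    ![a, b, c] - Mmat l *ᵥ ![a, b, c] =
      ![(1 - cosh l) * a - sinh l * b, (1 - cosh l) * b - sinh l * a, 0] := by
  ext i
  fin_cases i <;> simp [Mmat] <;> ring

lemma Rmat_mulVec :
    Rmat θ *ᵥ ![a, b, c] = ![a, cos θ * b - sin θ * c, sin θ * b + cos θ * c] := by
  ext i
  fin_cases i <;> simp [Rmat, mulVec, sub_eq_add_neg]

lemma Rmat_mul_Rmat_neg : Rmat θ * Rmat (-θ) = 1 := by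
  ext i j
  fin_cases i <;> fin_cases j <;>
    simp [Rmat, Matrix.mul_apply, Fin.sum_univ_three, ← sq, mul_comm]

lemma sub_Rmat_mul_mul_Rmat_neg_mulVec (A : Matrix (Fin 3) (Fin 3) ℝ) (x : Fin 3 → ℝ) :
    x - (Rmat θ * A * Rmat (-θ)) *ᵥ x = Rmat θ *ᵥ (Rmat (-θ) *ᵥ x - A *ᵥ (Rmat (-θ) *ᵥ x)) := by
  simp only [mulVec_sub, mulVec_mulVec, Rmat_mul_Rmat_neg, one_mulVec, Matrix.mul_assoc]

end Isometries

section Displacement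

variable (l m θ : ℝ)

lemma Rmat_neg_mulVec_vvec :
    Rmat (-θ) *ᵥ vvec l m θ =
      ![sinh l * sinh m + (cosh l - 1) * (cosh m - 1) * cos θ,
        -(sinh m * (cosh l - 1) * cos θ) - sinh l * (cosh m - 1),
        sinh m * (cosh l - 1) * sin θ] := by
  rw [vvec, Rmat_mulVec, cos_neg, sin_neg]
  congrm ![_, ?_, ?_]
  · linear_combination -(sinh l * (cosh m - 1)) * sin_sq_add_cos_sq θ
  · ring

lemma Rmat_neg_mulVec_vvec_sub_Mmat_mulVec :
    Rmat (-θ) *ᵥ vvec l m θ - Mmat m *ᵥ (Rmat (-θ) *ᵥ vvec l m θ) =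
      (2 * (cosh m - 1)) • ![(cosh l - 1) * cos θ, -sinh l, 0] := by
  rw [Rmat_neg_mulVec_vvec, vec3_sub_Mmat_mulVec, smul_vec3]
  congrm ![?_, ?_, ?_]
  · linear_combination -((cosh l - 1) * cos θ) * cosh_sq m
  · linear_combination sinh l * cosh_sq m
  · rw [smul_zero]

lemma vvec_sub_mulVec_vvec :
    vvec l m θ - (Rmat θ * Mmat m * Rmat (-θ)) *ᵥ vvec l m θ =
      (2 * (cosh m - 1)) • ![(cosh l - 1) * cos θ, -(sinh l * cos θ), -(sinh l * sin θ)] := by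
  rw [sub_Rmat_mul_mul_Rmat_neg_mulVec, Rmat_neg_mulVec_vvec_sub_Mmat_mulVec, mulVec_smul,
    Rmat_mulVec]
  congrm _ • ![_, ?_, ?_] <;> ring

end Displacement

section OrthogonalPlane

/-- The Minkowski form `B` as a bilinear form in the sense of Mathlib, so that `minkowskiForm x` is
the functional whose kernel is the orthogonal complement of `x`. -/
noncomputable def minkowskiForm : LinearMap.BilinForm ℝ (Fin 3 → ℝ) :=
  LinearMap.mk₂ ℝ B
    (fun x y z ↦ by simp only [B, Pi.add_apply]; ring)
    (fun a x y ↦ by simp only [B, Pi.smul_apply, smul_eq_mul]; ring)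
    (fun x y z ↦ by simp only [B, Pi.add_apply]; ring)
    (fun a x y ↦ by simp only [B, Pi.smul_apply, smul_eq_mul]; ring)

/-- The vector `o + γ⁻¹o` for `o = (1, 0, 0)` and `γ = Mmat l`. It is a multiple of the midpoint of
`o` and `γ⁻¹o` on the hyperboloid; only the line it spans matters, so it is not normalized. -/
noncomputable def axisMidpoint (l : ℝ) : Fin 3 → ℝ := ![cosh l + 1, -sinh l, 0]

variable (l m θ : ℝ)

lemma minkowskiForm_axisMidpoint (a b c : ℝ) :
    minkowskiForm (axisMidpoint l) ![a, b, c] = -((cosh l + 1) * a) - sinh l * b := by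
  simp [minkowskiForm, B, axisMidpoint, sub_eq_add_neg]

lemma minkowskiForm_axisMidpoint_ne_zero : minkowskiForm (axisMidpoint l) ≠ 0 := by
  intro h
  have h0 : minkowskiForm (axisMidpoint l) ![1, 0, 0] = 0 := by rw [h, LinearMap.zero_apply]
  rw [minkowskiForm_axisMidpoint] at h0
  linarith [cosh_pos l]

lemma minkowskiForm_axisMidpoint_wvec : minkowskiForm (axisMidpoint l) (wvec l m θ) = 0 := by
  rw [wvec, minkowskiForm_axisMidpoint]
  ring

lemma minkowskiForm_axisMidpoint_vvec_sub_mulVec_vvec :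
    minkowskiForm (axisMidpoint l)
      (vvec l m θ - (Rmat θ * Mmat m * Rmat (-θ)) *ᵥ vvec l m θ) = 0 := by
  rw [vvec_sub_mulVec_vvec, map_smul, minkowskiForm_axisMidpoint, smul_eq_mul]
  linear_combination -(2 * (cosh m - 1) * cos θ) * cosh_sq l

end OrthogonalPlane

section Independence

lemma linearIndependent_pair_of_apply_one_ne_zero {x : Fin 3 → ℝ} (hx : x 1 ≠ 0) :
    LinearIndependent ℝ ![x, ![0, 0, 1]] :=
  linearIndependent_pair_of_dual_eq_zero (f := LinearMap.proj 1) hx (by simp) (by simp)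

variable {l m θ : ℝ}

lemma wvec_apply_one_ne_zero (hm : m ≠ 0) (hθ : sin θ ≠ 0) : wvec l m θ 1 ≠ 0 := by
  have hcm : cosh m - 1 ≠ 0 := (sub_pos.2 (one_lt_cosh.2 hm)).ne'
  have hcl : cosh l + 1 ≠ 0 := (add_pos (cosh_pos l) one_pos).ne'
  simp [wvec, *]

lemma vvec_sub_mulVec_vvec_apply_one_ne_zero (hl : l ≠ 0) (hm : m ≠ 0) (hθ : cos θ ≠ 0) :
    (vvec l m θ - (Rmat θ * Mmat m * Rmat (-θ)) *ᵥ vvec l m θ) 1 ≠ 0 := by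
  have hcm : cosh m - 1 ≠ 0 := (sub_pos.2 (one_lt_cosh.2 hm)).ne'
  have hsl : sinh l ≠ 0 := sinh_eq_zero.not.2 hl
  rw [vvec_sub_mulVec_vvec]
  simp [*]

end Independence

theorem span_w_egamma_v_minus_deltav_general (l m θ : ℝ) (hl : l ≠ 0) (hm : m ≠ 0) :
    vvec l m θ - (Rmat θ * Mmat m * Rmat (-θ)).mulVec (vvec l m θ) =
      (2 * (cosh m - 1)) • ![(cosh l - 1) * cos θ, -(sinh l * cos θ), -(sinh l * sin θ)] ∧
    finrank ℝ (span ℝ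
      ({wvec l m θ, ![0, 0, 1],
        vvec l m θ - (Rmat θ * Mmat m * Rmat (-θ)).mulVec (vvec l m θ)} :
          Set (Fin 3 → ℝ))) = 2 := by
  refine ⟨vvec_sub_mulVec_vvec l m θ, ?_⟩
  set d := vvec l m θ - (Rmat θ * Mmat m * Rmat (-θ)) *ᵥ vvec l m θ
  obtain ⟨x, hx_mem, hx⟩ : ∃ x ∈ ({wvec l m θ, d} : Set (Fin 3 → ℝ)), x 1 ≠ 0 := by
    by_cases hθ : sin θ = 0
    · have hcos : cos θ ≠ 0 := fun h ↦ by simpa [hθ, h] using sin_sq_add_cos_sq θ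
      exact ⟨d, by simp, vvec_sub_mulVec_vvec_apply_one_ne_zero hl hm hcos⟩
    · exact ⟨wvec l m θ, by simp, wvec_apply_one_ne_zero hm hθ⟩
  have horth : {wvec l m θ, ![0, 0, 1], d} ⊆
      (LinearMap.ker (minkowskiForm (axisMidpoint l)) : Set (Fin 3 → ℝ)) := by
    rintro y (rfl | rfl | rfl)
    · exact minkowskiForm_axisMidpoint_wvec l m θ
    · simp [minkowskiForm_axisMidpoint]
    · exact minkowskiForm_axisMidpoint_vvec_sub_mulVec_vvec l m θ
  refine finrank_span_eq_card_of_subset_ker (minkowskiForm_axisMidpoint_ne_zero l) (by simp)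
    (linearIndependent_pair_of_apply_one_ne_zero hx) ?_ horth
  rw [range_cons_cons_empty]
  grind

theorem span_w_egamma_v_minus_deltav (l m θ : ℝ)
    (hl : 0 < l) (hm : 0 < m) (hθ : 0 < θ) (hθ' : θ < Real.pi) :
    vvec l m θ - (Rmat θ * Mmat m * Rmat (-θ)).mulVec (vvec l m θ) =
      (2 * (Real.cosh m - 1)) •
        ![(Real.cosh l - 1) * Real.cos θ, -(Real.sinh l * Real.cos θ),
          -(Real.sinh l * Real.sin θ)] ∧
    Module.finrank ℝ (Submodule.span ℝ
      ({wvec l m θ, ![0, 0, 1],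
        vvec l m θ - (Rmat θ * Mmat m * Rmat (-θ)).mulVec (vvec l m θ)} :
          Set (Fin 3 → ℝ))) = 2 :=
  span_w_egamma_v_minus_deltav_general l m θ hl.ne' hm.ne'
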